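/- (Proposition 5 and Corollary 3) For a Chaplygin system whose Lagrangian L is regular with respect to D and with respect to the Lie algebra g (i.e. (g_ab) = (Ẽ_a^v(Ẽ_b^v(L))) is nonsingular), the function L̃ = L − p_a v^a is a regular Lagrangian in some neighbourhood of C, is invariant under the action of G, and its Euler–Lagrange field Γ̃ is tangent to C; indeed the momentum of L̃ is p̃_a = Ẽ_a^v(L̃) = −g_{ab} v^b, whose zero level set is exactly C. Moreover φ_*Γ̃⁰, where Γ̃⁰ is the restriction of Γ̃ to C and φ is the section μ_a = p_a, is a solution of the vakonomic problem on the image of φ. -/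

import Mathlib

/-!
Write `w_a = v^a` for the constraint functions and `p_a = Ẽ_a^v(L)`.  Everything follows from
the lift of `L̃ = L − p_a w_a` along the frame, computed with the Leibniz rule.

* Vertical lifts commute and `Ẽ_b^v(w_a) = δ_ab`, `X_α^v(w_a) = 0`, so `Ẽ_a^v(L̃) = −g_ab w_b` and
  `X_α^v(L̃) = X_α^v(L) − X_α^v(p_a) w_a`.  Modulo the `w_a` the Hessian of `L̃` is therefore
  block diagonal with blocks `(g_αβ)` and `−(g_ab)`, both invertible by hypothesis.
* The `p_a` and the `w_a` transform under `Ẽ_a^c` by mutually contragredient representations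
  of the Lie algebra, so `p_a w_a` is invariant, and hence so is `L̃`.
* An Euler–Lagrange field `Γ̃` satisfies `Γ̃(g_ab w_b) = 0`; on `C` this reads
  `g_ab Γ̃(w_b) = 0`, so `Γ̃` is tangent to `C` because `(g_ab)` is invertible.  The remaining
  equations `Γ̃(X_α^v(L̃)) = X_α^c(L̃)`, restricted to `C`, are the vakonomic ones, the curvature
  term coming from `X_α^c(w_a) = −R^a_{αβ} v^β`.
-/

open scoped BigOperators

section LiftCalculus

variable (FQ F : Type*) [CommRing FQ] [CommRing F] [Algebra ℝ FQ] [Algebra ℝ F]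

/-- An algebraic model of the calculus of complete and vertical lifts on a tangent bundle
`τ : TQ → Q`.  Here `FQ` plays the role of the ring `C^∞(Q)` of smooth functions on the
configuration manifold `Q`, and `F` plays the role of `C^∞(TQ)`.  Vector fields on `Q`
(resp. on `TQ`) are modelled as `ℝ`-linear derivations of `FQ` (resp. of `F`).
`pull` is the pullback `τ^* : C^∞(Q) → C^∞(TQ)`, `dot` is the total derivative
`f ↦ ḟ`, `ḟ(q,u) = u(f)`, and `clift`/`vlift` are the complete and vertical lifts of
vector fields.  The axioms listed are the standard identities of this calculus. -/
structure LiftCalc where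
  pull : FQ →ₐ[ℝ] F
  dot : FQ →ₗ[ℝ] F
  clift : Derivation ℝ FQ FQ → Derivation ℝ F F
  vlift : Derivation ℝ FQ FQ → Derivation ℝ F F
  clift_add : ∀ Y Z, clift (Y + Z) = clift Y + clift Z
  vlift_add : ∀ Y Z, vlift (Y + Z) = vlift Y + vlift Z
  clift_pull : ∀ Z f, clift Z (pull f) = pull (Z f)
  vlift_pull : ∀ Z f, vlift Z (pull f) = 0
  clift_dot : ∀ Z f, clift Z (dot f) = dot (Z f)
  vlift_dot : ∀ Z f, vlift Z (dot f) = pull (Z f)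
  clift_smul : ∀ (f : FQ) (Z), clift (f • Z) = pull f • clift Z + dot f • vlift Z
  vlift_smul : ∀ (f : FQ) (Z), vlift (f • Z) = pull f • vlift Z
  bracket_cc : ∀ Y Z, ⁅clift Y, clift Z⁆ = clift ⁅Y, Z⁆
  bracket_cv : ∀ Y Z, ⁅clift Y, vlift Z⁆ = vlift ⁅Y, Z⁆
  bracket_vv : ∀ Y Z, ⁅vlift Y, vlift Z⁆ = 0

variable {FQ F}

/-- A vector field `Γ` on `TQ` is a second-order differential equation field precisely
when `Γ(τ^*f) = ḟ` for every `f ∈ C^∞(Q)`. -/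
def LiftCalc.IsSode (S : LiftCalc FQ F) (Γ : Derivation ℝ F F) : Prop :=
  ∀ f : FQ, Γ (S.pull f) = S.dot f

end LiftCalculus

section Constrained

variable (FQ F FC : Type*) [CommRing FQ] [CommRing F] [CommRing FC]
  [Algebra ℝ FQ] [Algebra ℝ F] [Algebra ℝ FC]
variable (ι κ : Type*) [Fintype ι] [Fintype κ] [DecidableEq ι] [DecidableEq κ]

/-- An anholonomic frame on `Q` adapted to a constraint distribution `D` of corank `#κ`:
the frame members `X (Sum.inl α)` (the `X_α`, `α ∈ ι`) span `D`, while the `X (Sum.inr a)`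
(the `X_a`, `a ∈ κ`) complete them to a full frame.  `qv i` is the quasi-velocity `v^i`
and `R k i j` the object of anholonomity, `[X_i, X_j] = R^k_{ij} X_k`.  The constraint
submanifold `C ⊂ TQ` is the common zero set of the `qv (Sum.inr a)` (i.e. `v^a = 0`). -/
structure NHFrame extends LiftCalc FQ F where
  X : ι ⊕ κ → Derivation ℝ FQ FQ
  qv : ι ⊕ κ → F
  R : ι ⊕ κ → ι ⊕ κ → ι ⊕ κ → FQ
  bracket_frame : ∀ i j, ⁅X i, X j⁆ = ∑ k, R k i j • X k
  clift_qv : ∀ i j, clift (X i) (qv j) = -∑ k, pull (R j i k) * qv k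
  vlift_qv : ∀ i j, vlift (X i) (qv j) = if j = i then 1 else 0
  dot_eq : ∀ f, dot f = ∑ i, qv i * pull (X i f)
  spanning : ∀ Z : Derivation ℝ FQ FQ, ∃ c : ι ⊕ κ → FQ, Z = ∑ i, c i • X i
  frame_indep : ∀ c : ι ⊕ κ → FQ, (∑ i, c i • X i) = 0 → ∀ i, c i = 0

/-- The full data of a nonholonomically constrained system: an adapted frame together
with the constraint submanifold `C`, modelled through its ring of functions `FC = C^∞(C)`
and the restriction homomorphism `ρ : C^∞(TQ) → C^∞(C)`, which is surjective with kernel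
the ideal generated by the constraint functions `v^a`.  The last two axioms say that the
restrictions to `C` of the lifted frame fields `X_i^c, X_i^v` form a frame along
`τ_C : C → Q`: every vector field along `C` is uniquely a combination of them. -/
structure NHSetup extends NHFrame FQ F ι κ where
  ρ : F →ₐ[ℝ] FC
  ρ_surj : Function.Surjective ρ
  ker_ρ : RingHom.ker (ρ : F →+* FC) = Ideal.span (Set.range fun a : κ => qv (Sum.inr a))
  frameC_span : ∀ T : F →ₗ[ℝ] FC, (∀ a b : F, T (a * b) = ρ a * T b + ρ b * T a) →
    ∃ c d : ι ⊕ κ → FC, ∀ h : F,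
      T h = ∑ i, c i * ρ (clift (X i) h) + ∑ i, d i * ρ (vlift (X i) h)
  frameC_indep : ∀ c d : ι ⊕ κ → FC,
    (∀ h : F, ∑ i, c i * ρ (clift (X i) h) + ∑ i, d i * ρ (vlift (X i) h) = 0) →
    (∀ i, c i = 0) ∧ (∀ i, d i = 0)

variable {FQ F FC ι κ}

/-- A vector field on (i.e. along) the constraint submanifold `C ⊂ TQ`: an `ℝ`-linear
derivation from `C^∞(TQ)` to `C^∞(C)` along the restriction map `ρ`. -/
structure DerAlong (S : NHSetup FQ F FC ι κ) where
  toFun : F →ₗ[ℝ] FC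
  leibniz' : ∀ a b : F, toFun (a * b) = S.ρ a * toFun b + S.ρ b * toFun a

/-- A vector field `Γ` on `C` is of second-order type iff `Γ(τ^*f) = ḟ|_C`. -/
def NHSetup.SodeOn (S : NHSetup FQ F FC ι κ) (Γ : DerAlong S) : Prop :=
  ∀ f : FQ, Γ.toFun (S.pull f) = S.ρ (S.dot f)

/-- A vector field `Γ` on `C` is tangent to `C` iff `Γ(v^a) = 0` for all `a`. -/
def NHSetup.TangentC (S : NHSetup FQ F FC ι κ) (Γ : DerAlong S) : Prop :=
  ∀ a : κ, Γ.toFun (S.qv (Sum.inr a)) = 0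

/-- The nonholonomic dynamics of the Lagrangian `L`: the vector field on `C`, of
second-order type and tangent to `C`, satisfying the Lagrange-d'Alembert equations
`Γ(X_α^v(L)) − X_α^c(L) = 0` on `C` for the frame `X_α` of `D`. -/
def NHSetup.IsNHDyn (S : NHSetup FQ F FC ι κ) (L : F) (Γ : DerAlong S) : Prop :=
  S.SodeOn Γ ∧ S.TangentC Γ ∧
    ∀ α : ι, Γ.toFun (S.vlift (S.X (Sum.inl α)) L) = S.ρ (S.clift (S.X (Sum.inl α)) L)

/-- The multipliers `λ_a = Γ(X_a^v(L)) − X_a^c(L)` of a vector field on `C`. -/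
def NHSetup.mult (S : NHSetup FQ F FC ι κ) (L : F) (Γ : DerAlong S) (a : κ) : FC :=
  Γ.toFun (S.vlift (S.X (Sum.inr a)) L) - S.ρ (S.clift (S.X (Sum.inr a)) L)

/-- `L` is regular with respect to `D`: the matrix `(X_α^v(X_β^v(L)))` is nonsingular
on `C`. -/
def NHSetup.RegularD (S : NHSetup FQ F FC ι κ) (L : F) : Prop :=
  IsUnit (Matrix.det (Matrix.of fun α β : ι =>
    S.ρ (S.vlift (S.X (Sum.inl α)) (S.vlift (S.X (Sum.inl β)) L))))

/-- `L` is regular with respect to `D^⊥`: the matrix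
`(g_{ab} − g^{αβ} g_{aα} g_{bβ})` is nonsingular on `C`. -/
def NHSetup.RegularDperp (S : NHSetup FQ F FC ι κ) (L : F) : Prop :=
  let gD : Matrix ι ι FC := Matrix.of fun α β =>
    S.ρ (S.vlift (S.X (Sum.inl α)) (S.vlift (S.X (Sum.inl β)) L))
  let gKI : Matrix κ ι FC := Matrix.of fun a β =>
    S.ρ (S.vlift (S.X (Sum.inr a)) (S.vlift (S.X (Sum.inl β)) L))
  let gIK : Matrix ι κ FC := Matrix.of fun α b =>
    S.ρ (S.vlift (S.X (Sum.inl α)) (S.vlift (S.X (Sum.inr b)) L))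
  let gK : Matrix κ κ FC := Matrix.of fun a b =>
    S.ρ (S.vlift (S.X (Sum.inr a)) (S.vlift (S.X (Sum.inr b)) L))
  IsUnit (Matrix.det (gK - gKI * gD⁻¹ * gIK))

end Constrained

section Vakonomic

variable {FQ F FC : Type*} [CommRing FQ] [CommRing F] [CommRing FC]
  [Algebra ℝ FQ] [Algebra ℝ F] [Algebra ℝ FC]
variable {ι κ : Type*} [Fintype ι] [Fintype κ] [DecidableEq ι] [DecidableEq κ]

/-- A solution `Γ̂ = Γ_C + Γ_μ` of the vakonomic problem restricted to the image of the
section `φ : μ_a = φ_a` of `C × ℝ^{n−m} → C`.  Here `ΓC` is the component along `TQ`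
(a vector field along `C`, of second-order type, but not necessarily tangent to `C`),
and `A a` is the `∂/∂μ_a`-component `Γ̂(μ_a)`.  The fields `eq_d` and `eq_t` are the
vakonomic Euler–Lagrange equations on `im(φ)`:
`Γ_C(X_α^v(L)) − X_α^c(L) = φ_a R^a_{αβ} v^β` and
`Γ_C(X_a^v(L)) − X_a^c(L) = φ_b R^b_{aα} v^α + A_a`. -/
structure VakSol (S : NHSetup FQ F FC ι κ) (L : F) (φ : κ → FC) where
  ΓC : DerAlong S
  A : κ → FC
  sode : S.SodeOn ΓC
  eq_d : ∀ α : ι, ΓC.toFun (S.vlift (S.X (Sum.inl α)) L) = S.ρ (S.clift (S.X (Sum.inl α)) L)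
      + ∑ a : κ, φ a *
        S.ρ (∑ β : ι, S.pull (S.R (Sum.inr a) (Sum.inl α) (Sum.inl β)) * S.qv (Sum.inl β))
  eq_t : ∀ a : κ, ΓC.toFun (S.vlift (S.X (Sum.inr a)) L) = S.ρ (S.clift (S.X (Sum.inr a)) L)
      + ∑ b : κ, φ b *
        S.ρ (∑ α : ι, S.pull (S.R (Sum.inr b) (Sum.inr a) (Sum.inl α)) * S.qv (Sum.inl α))
      + A a

end Vakonomic

section RouthianLemmas

variable {FQ F FC : Type*} [CommRing FQ] [CommRing F] [CommRing FC]
  [Algebra ℝ FQ] [Algebra ℝ F] [Algebra ℝ FC]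
variable {ι κ : Type*} [Fintype ι] [Fintype κ] [DecidableEq ι] [DecidableEq κ]

theorem LiftCalc.vlift_sum_smul (S : LiftCalc FQ F) {σ : Type*} (s : Finset σ) (c : σ → FQ)
    (Y : σ → Derivation ℝ FQ FQ) (h : F) :
    S.vlift (∑ k ∈ s, c k • Y k) h = ∑ k ∈ s, S.pull (c k) * S.vlift (Y k) h := by
  have key := map_sum (AddMonoidHom.mk' S.vlift S.vlift_add) (fun k => c k • Y k) s
  simp only [AddMonoidHom.mk'_apply, S.vlift_smul] at key
  have eval := congrFun (map_sum (Derivation.coeFnAddMonoidHom (R := ℝ) (A := F) (M := F))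
    (fun k => S.pull (c k) • S.vlift (Y k)) s) h
  rw [Finset.sum_apply] at eval
  rw [key]
  exact eval

theorem LiftCalc.vlift_comm (S : LiftCalc FQ F) (Y Z : Derivation ℝ FQ FQ) (h : F) :
    S.vlift Y (S.vlift Z h) = S.vlift Z (S.vlift Y h) := by
  have key := congrArg (fun D : Derivation ℝ F F => D h) (S.bracket_vv Y Z)
  simpa [Derivation.commutator_apply, sub_eq_zero] using key

/-- On an invariant function the complete lift of a frame field acts on momenta through the
structure functions: `X_i^c(X_j^v(L)) = R^k_{ij} X_k^v(L)`. -/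
theorem NHSetup.clift_momentum (S : NHSetup FQ F FC ι κ) (L : F) (i j : ι ⊕ κ)
    (hL : S.clift (S.X i) L = 0) :
    S.clift (S.X i) (S.vlift (S.X j) L)
      = ∑ k, S.pull (S.R k i j) * S.vlift (S.X k) L := by
  have key := congrArg (fun D : Derivation ℝ F F => D L) (S.bracket_cv (S.X i) (S.X j))
  simp only [Derivation.commutator_apply, hL, map_zero, sub_zero] at key
  rw [key, S.bracket_frame, S.vlift_sum_smul]

theorem NHSetup.rho_constraint (S : NHSetup FQ F FC ι κ) (a : κ) :
    S.ρ (S.qv (Sum.inr a)) = 0 := by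
  have hmem : S.qv (Sum.inr a) ∈ RingHom.ker (S.ρ : F →+* FC) := by
    rw [S.ker_ρ]
    exact Ideal.subset_span ⟨a, rfl⟩
  simpa [RingHom.mem_ker] using hmem

/-- A square linear system with invertible determinant does not change the ideal generated:
the entries of `M w` generate the same ideal as those of `w`. -/
theorem span_range_mulVec {A : Type*} [CommRing A] (M : Matrix κ κ A) (hM : IsUnit M.det)
    (w : κ → A) :
    Ideal.span (Set.range (M.mulVec w)) = Ideal.span (Set.range w) := by
  have le : ∀ (N : Matrix κ κ A) (u : κ → A),
      Ideal.span (Set.range (N.mulVec u)) ≤ Ideal.span (Set.range u) := by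
    intro N u
    rw [Ideal.span_le]
    rintro _ ⟨a, rfl⟩
    exact Ideal.sum_mem _ fun b _ => Ideal.mul_mem_left _ _ (Ideal.subset_span ⟨b, rfl⟩)
  refine le_antisymm (le M w) ?_
  have h := le M⁻¹ (M.mulVec w)
  rwa [Matrix.mulVec_mulVec, Matrix.nonsing_inv_mul _ hM, Matrix.one_mulVec] at h

/-- Any derivation applied to the Routhian `L − p_a v^a`. -/
theorem NHSetup.derivation_routhian (S : NHSetup FQ F FC ι κ) (L : F) (D : Derivation ℝ F F) :
    D (L - ∑ a : κ, S.vlift (S.X (Sum.inr a)) L * S.qv (Sum.inr a))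
      = D L - ∑ a : κ, (S.vlift (S.X (Sum.inr a)) L * D (S.qv (Sum.inr a))
          + S.qv (Sum.inr a) * D (S.vlift (S.X (Sum.inr a)) L)) := by
  simp [map_sub, map_sum, Derivation.leibniz]

theorem NHSetup.vlift_inl_routhian (S : NHSetup FQ F FC ι κ) (L : F) (α : ι) :
    S.vlift (S.X (Sum.inl α)) (L - ∑ a : κ, S.vlift (S.X (Sum.inr a)) L * S.qv (Sum.inr a))
      = S.vlift (S.X (Sum.inl α)) L - ∑ a : κ, S.qv (Sum.inr a) *
          S.vlift (S.X (Sum.inl α)) (S.vlift (S.X (Sum.inr a)) L) := by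
  rw [S.derivation_routhian]
  simp [S.vlift_qv]

theorem NHSetup.vlift_inr_routhian (S : NHSetup FQ F FC ι κ) (L : F) (a : κ) :
    S.vlift (S.X (Sum.inr a)) (L - ∑ a : κ, S.vlift (S.X (Sum.inr a)) L * S.qv (Sum.inr a))
      = -∑ b : κ, S.vlift (S.X (Sum.inr a)) (S.vlift (S.X (Sum.inr b)) L)
          * S.qv (Sum.inr b) := by
  rw [S.derivation_routhian]
  simp [S.vlift_qv, Finset.sum_add_distrib, mul_comm]

end RouthianLemmas

/-- **Proposition 5 and Corollary 3.**  For a Chaplygin system whose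
Lagrangian `L` is regular with respect to `D` and with respect to the Lie algebra `g`
(i.e. `(g_{ab}) = (Ẽ_a^v(Ẽ_b^v(L)))` is nonsingular), the function `L̃ = L − p_a v^a`
(with `p_a = Ẽ_a^v(L)`) is a regular Lagrangian in some neighbourhood of `C` (its
Hessian is nonsingular on `C`), is invariant under the action of `G`
(`Ẽ_a^c(L̃) = 0`), and its momentum is `p̃_a = Ẽ_a^v(L̃) = −g_{ab} v^b`, whose zero
level set is exactly `C` (the `p̃_a` generate the same ideal as the constraints `v^a`).
Moreover any Euler–Lagrange field `Γ̃` of `L̃` is tangent to `C`, and `φ_*Γ̃⁰`, where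
`Γ̃⁰` is the restriction of `Γ̃` to `C` and `φ` is the section `μ_a = p_a`, is a
solution of the vakonomic problem on the image of `φ`. -/
theorem chaplygin_routhian_lagrangian
    {FQ F FC : Type*} [CommRing FQ] [CommRing F] [CommRing FC]
    [Algebra ℝ FQ] [Algebra ℝ F] [Algebra ℝ FC]
    {ι κ : Type*} [Fintype ι] [Fintype κ] [DecidableEq ι] [DecidableEq κ]
    (S : NHSetup FQ F FC ι κ) (L : F)
    -- Chaplygin structure:
    (Cc : κ → κ → κ → ℝ)
    (hEE : ∀ a b, ⁅S.X (Sum.inr a), S.X (Sum.inr b)⁆ = -∑ c, Cc c a b • S.X (Sum.inr c))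
    (hEX : ∀ a α, ⁅S.X (Sum.inr a), S.X (Sum.inl α)⁆ = 0)
    (hR_aα : ∀ (k : ι ⊕ κ) a α, S.R k (Sum.inr a) (Sum.inl α) = 0)
    (hR_αa : ∀ (k : ι ⊕ κ) α a, S.R k (Sum.inl α) (Sum.inr a) = 0)
    (hR_tt : ∀ c a b, S.R (Sum.inr c) (Sum.inr a) (Sum.inr b) = algebraMap ℝ FQ (-(Cc c a b)))
    (hR_td : ∀ γ a b, S.R (Sum.inl γ) (Sum.inr a) (Sum.inr b) = 0)
    (hinvL : ∀ a, S.clift (S.X (Sum.inr a)) L = 0)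
    -- regularity with respect to `D` and with respect to `g`:
    (hregD : S.RegularD L)
    (hreg_g : IsUnit (Matrix.det (Matrix.of fun a b : κ =>
      S.vlift (S.X (Sum.inr a)) (S.vlift (S.X (Sum.inr b)) L))))
    -- the Lagrangian `L̃ = L − p_a v^a`:
    (Ltil : F) (hLtil : Ltil = L - ∑ a : κ,
      S.vlift (S.X (Sum.inr a)) L * S.qv (Sum.inr a)) :
    -- `L̃` is regular on (a neighbourhood of) `C`:
    (IsUnit (Matrix.det (Matrix.of fun i j : ι ⊕ κ =>
      S.ρ (S.vlift (S.X i) (S.vlift (S.X j) Ltil))))) ∧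
    -- `L̃` is `G`-invariant:
    (∀ a, S.clift (S.X (Sum.inr a)) Ltil = 0) ∧
    -- its momentum is `p̃_a = −g_{ab} v^b` …:
    (∀ a, S.vlift (S.X (Sum.inr a)) Ltil
      = -∑ b : κ, S.vlift (S.X (Sum.inr a)) (S.vlift (S.X (Sum.inr b)) L)
          * S.qv (Sum.inr b)) ∧
    -- … whose zero level set is exactly `C`:
    (Ideal.span (Set.range fun a : κ => S.vlift (S.X (Sum.inr a)) Ltil)
      = Ideal.span (Set.range fun a : κ => S.qv (Sum.inr a))) ∧
    -- any Euler–Lagrange field `Γ̃` of `L̃` is tangent to `C`, and `φ_*Γ̃⁰` solves the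
    -- vakonomic problem on the image of the section `φ : μ_a = p_a`:
    (∀ Γt : Derivation ℝ F F, S.toLiftCalc.IsSode Γt →
      (∀ i : ι ⊕ κ, Γt (S.vlift (S.X i) Ltil) = S.clift (S.X i) Ltil) →
      (∀ a : κ, S.ρ (Γt (S.qv (Sum.inr a))) = 0) ∧
      ∃ V : VakSol S L (fun a => S.ρ (S.vlift (S.X (Sum.inr a)) L)),
        (∀ h : F, V.ΓC.toFun h = S.ρ (Γt h)) ∧
        (∀ a, V.A a = S.ρ (Γt (S.vlift (S.X (Sum.inr a)) L)))) := by
  subst hLtil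
  have hw := S.rho_constraint
  set g : Matrix κ κ F := Matrix.of fun a b : κ =>
    S.vlift (S.X (Sum.inr a)) (S.vlift (S.X (Sum.inr b)) L) with hg
  have hgρ : IsUnit (g.map S.ρ).det := by
    have h := hreg_g.map S.ρ
    rwa [AlgHom.map_det] at h
  have hinv : ∀ a, S.clift (S.X (Sum.inr a))
      (L - ∑ a : κ, S.vlift (S.X (Sum.inr a)) L * S.qv (Sum.inr a)) = 0 := by
    intro a
    rw [S.derivation_routhian, hinvL, zero_sub, neg_eq_zero]
    simp only [S.clift_momentum L _ _ (hinvL a), S.clift_qv, Fintype.sum_sum_type, hR_aα, hR_td,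
      map_zero, zero_mul, Finset.sum_const_zero, zero_add, Finset.sum_add_distrib, mul_neg,
      Finset.sum_neg_distrib, Finset.mul_sum]
    rw [neg_add_eq_zero, Finset.sum_comm]
    exact Finset.sum_congr rfl fun b _ => Finset.sum_congr rfl fun c _ => by ring
  refine ⟨?_, hinv, S.vlift_inr_routhian L, ?_, ?_⟩
  · -- On `C` the Hessian is block diagonal.
    have hblock : (Matrix.of fun i j : ι ⊕ κ => S.ρ (S.vlift (S.X i) (S.vlift (S.X j)
        (L - ∑ a : κ, S.vlift (S.X (Sum.inr a)) L * S.qv (Sum.inr a)))))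
        = Matrix.fromBlocks (Matrix.of fun α β : ι =>
            S.ρ (S.vlift (S.X (Sum.inl α)) (S.vlift (S.X (Sum.inl β)) L))) 0 0
          (-(g.map S.ρ)) := by
      ext i j
      rcases i with α | a <;> rcases j with β | b
      · rw [Matrix.of_apply, S.vlift_inl_routhian]
        simp [Derivation.leibniz, hw, S.vlift_qv]
      · rw [Matrix.of_apply, S.vlift_inr_routhian]
        simp [Derivation.leibniz, hw, S.vlift_qv]
      · rw [Matrix.of_apply, S.vlift_inl_routhian]
        simp [Derivation.leibniz, hw, S.vlift_qv, apply_ite S.ρ,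
          S.vlift_comm (S.X (Sum.inr a)) (S.X (Sum.inl β))]
      · rw [Matrix.of_apply, S.vlift_inr_routhian]
        simp [Derivation.leibniz, hw, S.vlift_qv, apply_ite S.ρ, hg,
          S.vlift_comm (S.X (Sum.inr a)) (S.X (Sum.inr b))]
    rw [hblock, Matrix.det_fromBlocks_zero₂₁, Matrix.det_neg]
    exact hregD.mul (((isUnit_one.neg).pow _).mul hgρ)
  · have hp : (fun a : κ => S.vlift (S.X (Sum.inr a))
        (L - ∑ a : κ, S.vlift (S.X (Sum.inr a)) L * S.qv (Sum.inr a)))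
        = (-g).mulVec fun a => S.qv (Sum.inr a) := by
      funext a
      rw [S.vlift_inr_routhian, Matrix.neg_mulVec]
      rfl
    rw [hp]
    refine span_range_mulVec _ ?_ _
    rw [Matrix.det_neg]
    exact ((isUnit_one.neg).pow _).mul hreg_g
  · intro Γt hsode hEL
    have htan : ∀ a : κ, S.ρ (Γt (S.qv (Sum.inr a))) = 0 := by
      have hzero : (g.map S.ρ).mulVec (fun b => S.ρ (Γt (S.qv (Sum.inr b)))) = 0 := by
        funext a
        have h := congrArg S.ρ (hEL (Sum.inr a))
        rw [hinv, S.vlift_inr_routhian] at h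
        simpa [Derivation.leibniz, hw, Matrix.mulVec, dotProduct, hg] using h
      have h := congrArg ((g.map S.ρ)⁻¹.mulVec) hzero
      rw [Matrix.mulVec_mulVec, Matrix.nonsing_inv_mul _ hgρ, Matrix.one_mulVec,
        Matrix.mulVec_zero] at h
      exact fun a => congrFun h a
    refine ⟨htan, ⟨⟨⟨S.ρ.toLinearMap ∘ₗ (Γt : F →ₗ[ℝ] F), ?_⟩,
      fun a => S.ρ (Γt (S.vlift (S.X (Sum.inr a)) L)), ?_, ?_, ?_⟩, fun _ => rfl, fun _ => rfl⟩⟩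
    · intro x y
      simp [Derivation.leibniz]
    · intro f
      exact congrArg S.ρ (hsode f)
    · intro α
      have h := congrArg S.ρ (hEL (Sum.inl α))
      rw [S.vlift_inl_routhian, S.derivation_routhian] at h
      simp only [map_sub, map_sum, Derivation.leibniz, smul_eq_mul, map_add, map_mul, hw, htan,
        S.clift_qv, Fintype.sum_sum_type, hR_αa, map_zero, map_neg, zero_mul, mul_zero, add_zero,
        Finset.sum_const_zero, sub_zero, mul_neg, Finset.sum_neg_distrib, sub_neg_eq_add] at h
      simpa using h
    · intro a
      simp [hinvL, hR_aα]
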